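/- There exists a sequence f_{1,∞} = (f_1, f_2, …) of surjective continuous maps from I = [0,1] to itself (the sequence need not converge uniformly) such that the nonautonomous system (I, f_{1,∞}) has topological entropy h(f_{1,∞}) ≥ log 3 > 0 and has no Li-Yorke pair at all; in particular it is not Li-Yorke chaotic. -/

import Mathlib

open Filter Topology

noncomputable section

/-- The unit interval `[0,1]` as a type. -/
abbrev UI : Type := unitInterval

/-- Iterates of a nonautonomous system: `trajN f n = f_n ∘ ⋯ ∘ f_1` (0-indexed sequence). -/
def trajN (f : ℕ → UI → UI) : ℕ → UI → UI
  | 0 => id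
  | n + 1 => f n ∘ trajN f n

/-- `x, y` form a Li-Yorke pair for the nonautonomous system `f`. -/
def IsLYPair (f : ℕ → UI → UI) (x y : UI) : Prop :=
  0 < Filter.limsup (fun n => dist (trajN f n x) (trajN f n y)) Filter.atTop ∧
    Filter.liminf (fun n => dist (trajN f n x) (trajN f n y)) Filter.atTop = 0

/-- The nonautonomous system `f` is Li-Yorke chaotic: there is an uncountable scrambled set. -/
def LiYorkeChaotic (f : ℕ → UI → UI) : Prop :=
  ∃ S : Set UI, ¬ S.Countable ∧ ∀ x ∈ S, ∀ y ∈ S, x ≠ y → IsLYPair f x y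

/-- `E` is an `(n, ε, A)`-separated set for the nonautonomous system `f`. -/
def IsSepSet (f : ℕ → UI → UI) (A : ℕ → ℕ) (n : ℕ) (ε : ℝ) (E : Set UI) : Prop :=
  ∀ x ∈ E, ∀ y ∈ E, x ≠ y → ∃ j < n, ε < dist (trajN f (A j) x) (trajN f (A j) y)

/-- Maximal cardinality of an `(n, ε, A)`-separated set. -/
def sepNum (f : ℕ → UI → UI) (A : ℕ → ℕ) (n : ℕ) (ε : ℝ) : ℕ :=
  sSup {m : ℕ | ∃ E : Finset UI, E.card = m ∧ IsSepSet f A n ε ↑E}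

/-- Topological sequence entropy of the nonautonomous system `f` with respect to the
increasing sequence `A` (the limit as `ε → 0⁺` is realized as a supremum over `ε > 0`,
since the inner quantity is antitone in `ε`). -/
def seqEntropy (f : ℕ → UI → UI) (A : ℕ → ℕ) : EReal :=
  ⨆ ε ∈ Set.Ioi (0 : ℝ),
    Filter.limsup
      (fun n => ((Real.log (sepNum f A n ε) / (A (n - 1) : ℝ) : ℝ) : EReal)) Filter.atTop

/-- `E` is an `(n, ε)`-separated set for the nonautonomous system `f`. -/
def IsSepSetT (f : ℕ → UI → UI) (n : ℕ) (ε : ℝ) (E : Set UI) : Prop :=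
  ∀ x ∈ E, ∀ y ∈ E, x ≠ y → ∃ j < n, ε < dist (trajN f j x) (trajN f j y)

/-- Maximal cardinality of an `(n, ε)`-separated set. -/
def sepNumT (f : ℕ → UI → UI) (n : ℕ) (ε : ℝ) : ℕ :=
  sSup {m : ℕ | ∃ E : Finset UI, E.card = m ∧ IsSepSetT f n ε ↑E}

/-- Topological entropy of the nonautonomous system `f` (the limit as `ε → 0⁺` is realized
as a supremum over `ε > 0`, since the inner quantity is antitone in `ε`). -/
def topEntropyNDS (f : ℕ → UI → UI) : EReal :=
  ⨆ ε ∈ Set.Ioi (0 : ℝ),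
    Filter.limsup (fun n => ((Real.log (sepNumT f n ε) / (n : ℝ) : ℝ) : EReal)) Filter.atTop

/-- The real zigzag map: full oscillations on `[0,1/2]`, identity on `[1/2,1]`. -/
def zigR (x : ℝ) : ℝ := if x ≤ 1/2 then (1 - Real.cos (10 * Real.pi * x)) / 4 else x

lemma zigR_cont : Continuous zigR := by
  unfold zigR
  refine Continuous.if_le (by fun_prop) continuous_id continuous_id continuous_const ?_
  intro x hx
  have hx' : x = 1/2 := hx
  subst hx'
  have h : 10 * Real.pi * (1/2) = (2:ℕ) * (2 * Real.pi) + Real.pi := by push_cast; ring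
  rw [h, Real.cos_nat_mul_two_pi_add_pi]
  norm_num

lemma zigR_low {x : ℝ} (hx : x ≤ 1/2) : 0 ≤ zigR x ∧ zigR x ≤ 1/2 := by
  unfold zigR
  rw [if_pos hx]
  have h1 := Real.neg_one_le_cos (10 * Real.pi * x)
  have h2 := Real.cos_le_one (10 * Real.pi * x)
  constructor <;> linarith

lemma zigR_high {x : ℝ} (hx : ¬ x ≤ 1/2) : zigR x = x := by
  unfold zigR
  rw [if_neg hx]

def zig (x : UI) : UI := ⟨zigR x, by
  by_cases h : (x:ℝ) ≤ 1/2
  · have := zigR_low h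
    exact ⟨this.1, by linarith [this.2]⟩
  · rw [zigR_high h]; exact x.2⟩

/-- The collapsing map `max 0 (2x-1)`. -/
def col (x : UI) : UI := ⟨max 0 (2 * (x:ℝ) - 1), by
  have := x.2.2
  exact ⟨le_max_left _ _, max_le (by norm_num) (by linarith)⟩⟩

lemma zig_cont : Continuous zig :=
  Continuous.subtype_mk (zigR_cont.comp continuous_subtype_val) _

lemma col_cont : Continuous col :=
  Continuous.subtype_mk (by fun_prop) _

lemma zig_section (d : Fin 3) (y : UI) (hy : (y:ℝ) ≤ 1/2) :
    ∃ x : UI, zig x = y ∧ ((d:ℕ):ℝ)/5 ≤ x ∧ (x:ℝ) ≤ ((d:ℕ):ℝ)/5 + 1/10 := by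
  have hd : ((d:ℕ):ℝ) ≤ 2 := by
    have : (d:ℕ) ≤ 2 := by omega
    exact_mod_cast this
  have hd0 : (0:ℝ) ≤ ((d:ℕ):ℝ) := Nat.cast_nonneg _
  have hc : ContinuousOn (fun x : ℝ => (1 - Real.cos (10 * Real.pi * x)) / 4)
      (Set.Icc (((d:ℕ):ℝ)/5) (((d:ℕ):ℝ)/5 + 1/10)) := by fun_prop
  have := intermediate_value_Icc (by linarith) hc
  have h1 : 10 * Real.pi * (((d:ℕ):ℝ)/5) = (d:ℕ) * (2 * Real.pi) := by ring
  have h2 : 10 * Real.pi * (((d:ℕ):ℝ)/5 + 1/10) = (d:ℕ) * (2 * Real.pi) + Real.pi := by ring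
  simp only [h1, h2, Real.cos_nat_mul_two_pi, Real.cos_nat_mul_two_pi_add_pi] at this
  obtain ⟨x, hx, hxy⟩ := this (a := (y:ℝ)) ⟨by linarith [y.2.1], by linarith⟩
  refine ⟨⟨x, by linarith [hx.1], by linarith [hx.2]⟩, ?_, hx.1, hx.2⟩
  apply Subtype.ext
  show zigR x = y
  unfold zigR
  rw [if_pos (by linarith [hx.2])]
  exact hxy

lemma zig_surj : Function.Surjective zig := by
  intro y
  by_cases h : (y:ℝ) ≤ 1/2
  · obtain ⟨x, hx, -⟩ := zig_section 0 y h
    exact ⟨x, hx⟩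
  · exact ⟨y, Subtype.ext (zigR_high h)⟩

lemma col_surj : Function.Surjective col := by
  intro y
  refine ⟨⟨(1 + y)/2, by linarith [y.2.1], by linarith [y.2.2]⟩, Subtype.ext ?_⟩
  show max 0 (2 * ((1 + (y:ℝ))/2) - 1) = y
  rw [max_eq_right] <;> linarith [y.2.1]

open Classical in
/-- The system: collapse at factorial times, zigzag otherwise. -/
def sysF (n : ℕ) : UI → UI := if ∃ k : ℕ, n = k.factorial then col else zig

lemma sysF_fact (k : ℕ) : sysF k.factorial = col := by
  unfold sysF
  rw [if_pos ⟨k, rfl⟩]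

lemma sysF_cases (n : ℕ) : sysF n = col ∨ sysF n = zig := by
  unfold sysF
  split_ifs <;> simp

lemma sysF_gap (k n : ℕ) (h1 : k.factorial < n) (h2 : n < (k+1).factorial) : sysF n = zig := by
  unfold sysF
  rw [if_neg]
  rintro ⟨l, rfl⟩
  have a : k < l := by
    by_contra h
    exact absurd (Nat.factorial_le (not_lt.mp h)) (by omega)
  have := Nat.factorial_le (show k + 1 ≤ l from a)
  omega

lemma sysF_cont (n : ℕ) : Continuous (sysF n) := by
  rcases sysF_cases n with h | h <;> rw [h]
  exacts [col_cont, zig_cont]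

lemma sysF_surj (n : ℕ) : Function.Surjective (sysF n) := by
  rcases sysF_cases n with h | h <;> rw [h]
  exacts [col_surj, zig_surj]

lemma traj_surj (n : ℕ) : Function.Surjective (trajN sysF n) := by
  induction n with
  | zero => exact Function.surjective_id
  | succ n ih => exact (sysF_surj n).comp ih

lemma sysF_one (n : ℕ) : sysF n 1 = 1 := by
  rcases sysF_cases n with h | h <;> rw [h] <;> apply Subtype.ext
  · show max 0 (2 * (1:ℝ) - 1) = 1
    norm_num
  · exact zigR_high (by norm_num)

lemma sysF_zero (n : ℕ) : sysF n 0 = 0 := by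
  rcases sysF_cases n with h | h <;> rw [h] <;> apply Subtype.ext
  · show max 0 (2 * (0:ℝ) - 1) = 0
    norm_num
  · show zigR 0 = 0
    unfold zigR
    norm_num

lemma traj_one (n : ℕ) : trajN sysF n 1 = 1 := by
  induction n with
  | zero => rfl
  | succ n ih =>
    show sysF n (trajN sysF n 1) = 1
    rw [ih, sysF_one]

lemma sysF_pres (n : ℕ) (x : UI) (δ : ℝ) (hδ : δ ≤ 1/2) (h : δ ≤ 1 - (x:ℝ)) :
    δ ≤ 1 - (sysF n x : ℝ) := by
  rcases sysF_cases n with hh | hh <;> rw [hh]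
  · show δ ≤ 1 - max 0 (2 * (x:ℝ) - 1)
    rcases max_cases 0 (2 * (x:ℝ) - 1) with ⟨a, b⟩ | ⟨a, b⟩ <;> rw [a] <;> linarith [x.2.2]
  · show δ ≤ 1 - zigR x
    by_cases hx : (x:ℝ) ≤ 1/2
    · linarith [(zigR_low hx).2]
    · rw [zigR_high hx]; exact h

lemma traj_pres (x : UI) (δ : ℝ) (hδ : δ ≤ 1/2) (n m : ℕ) (hnm : n ≤ m)
    (h : δ ≤ 1 - (trajN sysF n x : ℝ)) : δ ≤ 1 - (trajN sysF m x : ℝ) := by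
  induction m, hnm using Nat.le_induction with
  | base => exact h
  | succ m _ ih => exact sysF_pres m _ δ hδ ih

lemma traj_grow (x : UI) (k : ℕ) :
    ∃ n, min (1/2) (2^k * (1 - (x:ℝ))) ≤ 1 - (trajN sysF n x : ℝ) := by
  induction k with
  | zero => exact ⟨0, by simp [trajN]⟩
  | succ k ih =>
    obtain ⟨n, hn⟩ := ih
    have h := traj_pres x _ (min_le_left _ _) n n.factorial (Nat.self_le_factorial n) hn
    refine ⟨n.factorial + 1, ?_⟩
    show _ ≤ 1 - (sysF n.factorial (trajN sysF n.factorial x) : ℝ)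
    rw [sysF_fact]
    generalize trajN sysF n.factorial x = z at h
    show _ ≤ 1 - max 0 (2 * (z:ℝ) - 1)
    rw [pow_succ]
    rcases max_cases 0 (2 * (z:ℝ) - 1) with ⟨a, b⟩ | ⟨a, b⟩ <;> rw [a]
    · exact (min_le_left _ _).trans (by norm_num)
    · rcases min_le_iff.mp h with h | h
      · exact (min_le_left _ _).trans (by linarith)
      · exact (min_le_right _ _).trans (by linarith)

lemma traj_zero (x : UI) (hx : x ≠ 1) : ∀ᶠ n in atTop, trajN sysF n x = 0 := by
  have hx1 : 0 < 1 - (x:ℝ) := by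
    have : (x:ℝ) ≠ 1 := fun h => hx (Subtype.ext h)
    have := lt_of_le_of_ne x.2.2 this
    linarith
  obtain ⟨k, hk⟩ := pow_unbounded_of_one_lt (1 / (1 - (x:ℝ))) (by norm_num : (1:ℝ) < 2)
  obtain ⟨n, hn⟩ := traj_grow x k
  rw [div_lt_iff₀ hx1] at hk
  rw [min_eq_left (by linarith)] at hn
  have h := traj_pres x _ le_rfl n n.factorial (Nat.self_le_factorial n) hn
  have h0 : trajN sysF (n.factorial + 1) x = 0 := by
    show sysF n.factorial (trajN sysF n.factorial x) = 0
    rw [sysF_fact]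
    apply Subtype.ext
    show max 0 (2 * (trajN sysF n.factorial x : ℝ) - 1) = 0
    exact max_eq_left (by linarith)
  filter_upwards [eventually_ge_atTop (n.factorial + 1)] with m hm
  induction m, hm using Nat.le_induction with
  | base => exact h0
  | succ m _ ih =>
    show sysF m (trajN sysF m x) = 0
    rw [ih, sysF_zero]

lemma no_LY (x y : UI) (hxy : x ≠ y) : ¬ IsLYPair sysF x y := by
  rintro ⟨h1, h2⟩
  by_cases hx : x = 1
  · have hy : y ≠ 1 := fun h => hxy (hx.trans h.symm)
    have : (fun n => dist (trajN sysF n x) (trajN sysF n y)) =ᶠ[atTop] fun _ => (1:ℝ) := by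
      filter_upwards [traj_zero y hy] with n hn
      rw [hn, hx, traj_one, Subtype.dist_eq]; simp
    rw [liminf_congr this, liminf_const] at h2
    norm_num at h2
  by_cases hy : y = 1
  · have : (fun n => dist (trajN sysF n x) (trajN sysF n y)) =ᶠ[atTop] fun _ => (1:ℝ) := by
      filter_upwards [traj_zero x hx] with n hn
      rw [hn, hy, traj_one, Subtype.dist_eq]; simp
    rw [liminf_congr this, liminf_const] at h2
    norm_num at h2
  · have : (fun n => dist (trajN sysF n x) (trajN sysF n y)) =ᶠ[atTop] fun _ => (0:ℝ) := by
      filter_upwards [traj_zero x hx, traj_zero y hy] with n hn hn'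
      rw [hn, hn', dist_self]
    rw [limsup_congr this, limsup_const] at h1
    exact lt_irrefl _ h1

/-- Points with a prescribed itinerary. -/
lemma itin (m : ℕ) : ∀ w : ℕ → Fin 3, ∃ x : UI, (x:ℝ) ≤ 1/2 ∧
    ∀ j < m, ((w j : ℕ):ℝ)/5 ≤ (zig^[j] x : UI) ∧ ((zig^[j] x : UI):ℝ) ≤ ((w j : ℕ):ℝ)/5 + 1/10 := by
  induction m with
  | zero => exact fun w => ⟨0, by norm_num, fun j hj => absurd hj (by omega)⟩
  | succ m ih =>
    intro w
    obtain ⟨y, hy, hyj⟩ := ih (fun j => w (j+1))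
    obtain ⟨x, hx, hx1, hx2⟩ := zig_section (w 0) y hy
    have hd : ((w 0:ℕ):ℝ) ≤ 2 := by
      have : (w 0:ℕ) ≤ 2 := by omega
      exact_mod_cast this
    refine ⟨x, by linarith, ?_⟩
    intro j hj
    cases j with
    | zero => exact ⟨hx1, hx2⟩
    | succ j =>
      rw [Function.iterate_succ_apply, hx]
      exact hyj j (by omega)

lemma sep_bdd (f : ℕ → UI → UI) (n : ℕ) (ε : ℝ) (hε : 0 < ε) :
    BddAbove {m : ℕ | ∃ E : Finset UI, E.card = m ∧ IsSepSetT f n ε ↑E} := by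
  refine ⟨Fintype.card (Fin n → Fin (⌊1/ε⌋₊ + 1)), ?_⟩
  rintro m ⟨E, rfl, hE⟩
  let F : UI → (Fin n → Fin (⌊1/ε⌋₊ + 1)) := fun x j =>
    ⟨⌊(trajN f j x : ℝ)/ε⌋₊, Nat.lt_succ_of_le (Nat.floor_le_floor
      (div_le_div_of_nonneg_right (trajN f j x).2.2 hε.le))⟩
  refine Finset.card_le_card_of_injOn F (t := Finset.univ) (fun _ _ => Finset.mem_univ _) ?_
  intro x hx y hy hxy
  by_contra hne
  obtain ⟨j, hj, hd⟩ := hE x hx y hy hne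
  have h := congrArg Fin.val (congrFun hxy ⟨j, hj⟩)
  simp only [F] at h
  have hx0 := (trajN f j x).2.1
  have hy0 := (trajN f j y).2.1
  have a1 := Nat.floor_le (div_nonneg hx0 hε.le)
  have a2 := Nat.lt_floor_add_one ((trajN f j x : ℝ)/ε)
  have b1 := Nat.floor_le (div_nonneg hy0 hε.le)
  have b2 := Nat.lt_floor_add_one ((trajN f j y : ℝ)/ε)
  rw [h] at a1 a2
  rw [le_div_iff₀ hε] at a1 b1
  rw [div_lt_iff₀ hε] at a2 b2
  rw [Subtype.dist_eq, Real.dist_eq] at hd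
  have : |(trajN f j x : ℝ) - trajN f j y| ≤ ε := by
    rw [abs_le]; constructor <;> nlinarith
  linarith

lemma traj_block (k j : ℕ) (hj : k.factorial + 1 + j ≤ (k+1).factorial) (z : UI) :
    trajN sysF (k.factorial + 1 + j) z = zig^[j] (trajN sysF (k.factorial + 1) z) := by
  induction j with
  | zero => rfl
  | succ j ih =>
    rw [Function.iterate_succ_apply', ← ih (by omega)]
    show sysF (k.factorial + 1 + j) _ = _
    rw [sysF_gap k _ (by omega) (by omega)]
    rfl

lemma sep_lower (k m : ℕ) (hm : k.factorial + 1 + m = (k+1).factorial) :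
    3 ^ m ≤ sepNumT sysF (k+1).factorial (1/20) := by
  have key : ∀ w : Fin m → Fin 3, ∃ z : UI, ∀ j : Fin m,
      ((w j : ℕ):ℝ)/5 ≤ (trajN sysF (k.factorial + 1 + j) z : UI) ∧
      ((trajN sysF (k.factorial + 1 + j) z : UI):ℝ) ≤ ((w j : ℕ):ℝ)/5 + 1/10 := by
    intro w
    obtain ⟨x, -, hx⟩ := itin m (fun j => if h : j < m then w ⟨j, h⟩ else 0)
    obtain ⟨z, hz⟩ := traj_surj (k.factorial + 1) x
    refine ⟨z, fun j => ?_⟩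
    have := hx j j.2
    rw [traj_block k j (by omega), hz]
    simpa using this
  choose Z hZ using key
  have sep : ∀ w w', w ≠ w' → ∃ j < (k+1).factorial,
      1/20 < dist (trajN sysF j (Z w)) (trajN sysF j (Z w')) := by
    intro w w' hw
    obtain ⟨j, hj⟩ := Function.ne_iff.mp hw
    refine ⟨k.factorial + 1 + j, by omega, ?_⟩
    have h1 := hZ w j
    have h2 := hZ w' j
    rw [Subtype.dist_eq, Real.dist_eq]
    rcases lt_or_gt_of_ne hj with h | h
    · have : ((w j : ℕ):ℝ) + 1 ≤ (w' j : ℕ) := by exact_mod_cast h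
      rw [lt_abs]; right; linarith
    · have : ((w' j : ℕ):ℝ) + 1 ≤ (w j : ℕ) := by exact_mod_cast h
      rw [lt_abs]; left; linarith
  have inj : Function.Injective Z := by
    intro w w' h
    by_contra hne
    obtain ⟨j, -, hj⟩ := sep w w' hne
    rw [h, dist_self] at hj
    norm_num at hj
  refine le_csSup (sep_bdd _ _ _ (by norm_num)) ⟨Finset.univ.map ⟨Z, inj⟩, by simp, ?_⟩
  intro x hx y hy hxy
  simp only [Finset.coe_map, Function.Embedding.coeFn_mk, Finset.coe_univ, Set.image_univ,
    Set.mem_range] at hx hy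
  obtain ⟨w, rfl⟩ := hx
  obtain ⟨w', rfl⟩ := hy
  exact sep w w' (fun h => hxy (by rw [h]))

lemma log3_pos : 0 < Real.log 3 := Real.log_pos (by norm_num)

lemma rate_lower (k : ℕ) (hk : 1 ≤ k) :
    (1 - 2 / ((k:ℝ) + 1)) * Real.log 3 ≤
      Real.log (sepNumT sysF (k+1).factorial (1/20)) / ((k+1).factorial : ℝ) := by
  have hlt : k.factorial + 1 ≤ (k+1).factorial := (Nat.factorial_lt hk).2 (Nat.lt_succ_self k)
  obtain ⟨m, hm⟩ := Nat.exists_eq_add_of_le hlt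
  have h := sep_lower k m hm.symm
  have hpos : (0:ℝ) < (k+1).factorial := by exact_mod_cast Nat.factorial_pos _
  rw [le_div_iff₀ hpos]
  have h3 : (m:ℝ) * Real.log 3 ≤ Real.log (sepNumT sysF (k+1).factorial (1/20)) := by
    rw [← Real.log_pow]
    apply Real.log_le_log (by positivity)
    exact_mod_cast h
  refine le_trans ?_ h3
  have e1 : ((k+1).factorial : ℝ) = k.factorial + 1 + m := by exact_mod_cast hm
  have e2 : ((k+1).factorial : ℝ) = ((k:ℝ)+1) * k.factorial := by
    rw [Nat.factorial_succ]; push_cast; ring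
  have e3 : (1:ℝ) ≤ k.factorial := by exact_mod_cast Nat.factorial_pos k
  have e4 : (1 - 2 / ((k:ℝ) + 1)) * ((k+1).factorial : ℝ) ≤ m := by
    have : (1 - 2 / ((k:ℝ) + 1)) * ((k+1).factorial : ℝ) = (k+1).factorial - 2 * k.factorial := by
      rw [e2]; field_simp
    rw [this]; linarith
  nlinarith [log3_pos]

lemma entropy_lower : (Real.log 3 : EReal) ≤ topEntropyNDS sysF := by
  unfold topEntropyNDS
  refine le_trans ?_ (le_iSup₂ (f := fun (ε : ℝ) (_ : ε ∈ Set.Ioi (0:ℝ)) =>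
    Filter.limsup (fun n => ((Real.log (sepNumT sysF n ε) / (n : ℝ) : ℝ) : EReal)) Filter.atTop)
    (1/20 : ℝ) (by norm_num : (1/20:ℝ) ∈ Set.Ioi (0:ℝ)))
  apply le_of_forall_lt
  intro r hr
  have ht : Tendsto (fun k : ℕ => (((1 - 2 / ((k:ℝ) + 1)) * Real.log 3 : ℝ) : EReal)) atTop
      (𝓝 (Real.log 3 : EReal)) := by
    refine (continuous_coe_real_ereal.tendsto _).comp ?_
    have h1 : Tendsto (fun k : ℕ => (2:ℝ) * (1 / ((k:ℝ) + 1))) atTop (𝓝 (2 * 0)) :=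
      tendsto_one_div_add_atTop_nhds_zero_nat.const_mul 2
    have h2 := (h1.const_sub 1).mul_const (Real.log 3)
    simp only [mul_zero, sub_zero, one_mul] at h2
    refine h2.congr fun k => ?_
    ring
  obtain ⟨r', hr1, hr2⟩ := exists_between hr
  refine lt_of_lt_of_le hr1 ?_
  refine le_limsup_of_frequently_le ?_ (by isBoundedDefault)
  rw [frequently_atTop]
  intro a
  obtain ⟨k, hk1, hk2⟩ := ((ht.eventually (lt_mem_nhds hr2)).and
    (eventually_ge_atTop (max a 1))).exists
  refine ⟨(k+1).factorial, ?_, ?_⟩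
  · have := Nat.self_le_factorial (k+1)
    have := le_max_left a 1
    omega
  · refine hk1.le.trans ?_
    exact_mod_cast rate_lower k ((le_max_right a 1).trans hk2)

/-- There is a (not necessarily uniformly convergent) nonautonomous system of surjective
continuous interval maps with topological entropy at least `log 3 > 0` and no Li-Yorke
pair at all; in particular it is not Li-Yorke chaotic. -/
theorem exists_nds_posEntropy_no_LYpair :
    ∃ f : ℕ → UI → UI,
      (∀ n, Continuous (f n)) ∧ (∀ n, Function.Surjective (f n)) ∧
      (Real.log 3 : EReal) ≤ topEntropyNDS f ∧ (0 : EReal) < (Real.log 3 : EReal) ∧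
      (∀ x y : UI, x ≠ y → ¬ IsLYPair f x y) ∧
      ¬ LiYorkeChaotic f := by
  refine ⟨sysF, sysF_cont, sysF_surj, entropy_lower, by exact_mod_cast log3_pos, no_LY, ?_⟩
  rintro ⟨S, hS, h⟩
  apply hS
  apply Set.Subsingleton.countable
  intro x hx y hy
  by_contra hne
  exact no_LY x y hne (h x hx y hy hne)
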